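/- Let δ ∈ (0,1) and let φ : ℝ → ℝ be continuously differentiable with φ'(x) > 0 for all x and φ(x+1) = φ(x) + 1 for all x (a lift of an orientation-preserving diffeomorphism of the circle ℝ/ℤ). Suppose that φ displaces the arc (0, 1−δ): for every x ∈ (0, 1−δ), the fractional part of φ(x) does not lie in (0, 1−δ). Then sup_{x∈ℝ} φ'(x) ≥ (1−δ)/δ. -/

import Mathlib

/-!
The lift `φ` carries `(0, 1 - δ)` onto the interval `(φ 0, φ (1 - δ))`, which must avoid every
translate `(n, n + 1 - δ)`; hence it lies in a gap of length `δ`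
(`stmt19_image_length_le`). As `φ 1 = φ 0 + 1`, the complementary arc `[1 - δ, 1]` of length `δ` is
stretched onto an interval of length at least `1 - δ`, and the mean value theorem produces a point
where `φ'` is at least `(1 - δ) / δ`. The derivative is continuous and `1`-periodic, hence bounded,
so its supremum dominates this value (`stmt19_bddAbove_deriv`).
-/

open Set

theorem stmt19_bddAbove_deriv (φ : ℝ → ℝ) (hφ : ContDiff ℝ 1 φ)
    (hper : ∀ x : ℝ, φ (x + 1) = φ x + 1) : BddAbove (range (deriv φ)) := by
  have hp : Function.Periodic (deriv φ) 1 := fun x => by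
    rw [← deriv_comp_add_const, funext hper, deriv_add_const]
  exact (hp.isBounded_of_continuous one_ne_zero (hφ.continuous_deriv le_rfl)).bddAbove

/-- An open interval that is longer than `δ` meets some translate `(n, n + 1 - δ)`, so a continuous
map displacing `(0, 1 - δ)` cannot spread the endpoints of this arc by more than `δ`. -/
theorem stmt19_image_length_le (δ : ℝ) (hδ : δ ∈ Ioo (0:ℝ) 1) (φ : ℝ → ℝ) (hφ : Continuous φ)
    (hdisp : ∀ x ∈ Ioo (0:ℝ) (1 - δ), Int.fract (φ x) ∉ Ioo (0:ℝ) (1 - δ)) :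
    φ (1 - δ) - φ 0 ≤ δ := by
  obtain ⟨h0, h1⟩ := hδ
  by_contra! hlt
  -- It suffices to find a point of the image interval in some `(n, n + 1 - δ)`.
  have key : ∀ (n : ℤ) (y : ℝ), φ 0 < y → y < φ (1 - δ) → (n : ℝ) < y → y < n + (1 - δ) →
      False := by
    intro n y hay hyb hny hyn
    obtain ⟨x, hx, rfl⟩ :=
      intermediate_value_Ioo (by linarith : (0:ℝ) ≤ 1 - δ) hφ.continuousOn ⟨hay, hyb⟩
    have hfl : ⌊φ x⌋ = n := Int.floor_eq_iff.2 ⟨hny.le, by linarith⟩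
    refine hdisp x hx ?_
    rw [Int.fract, hfl]
    constructor <;> linarith
  have hn := Int.floor_le (φ 0)
  have hn' := Int.lt_floor_add_one (φ 0)
  rcases lt_or_ge (φ 0) (⌊φ 0⌋ + (1 - δ)) with h | h
  · obtain ⟨y, hy, hy'⟩ := exists_between (lt_min (by linarith : φ 0 < φ (1 - δ)) h)
    rw [lt_min_iff] at hy'
    exact key _ y hy hy'.1 (by linarith) hy'.2
  -- Otherwise `φ 0` lies in the gap ending at `⌊φ 0⌋ + 1`, and the image extends beyond that point.
  · obtain ⟨y, hy, hy'⟩ := exists_between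
      (lt_min (by linarith : (⌊φ 0⌋ : ℝ) + 1 < φ (1 - δ))
        (by linarith : (⌊φ 0⌋ : ℝ) + 1 < ⌊φ 0⌋ + 1 + (1 - δ)))
    rw [lt_min_iff] at hy'
    exact key (⌊φ 0⌋ + 1) y (by linarith) hy'.1 (by push_cast; exact hy)
      (by push_cast; exact hy'.2)

/-- A circle diffeomorphism (given by a lift `φ : ℝ → ℝ` with `φ' > 0` and `φ(x+1) = φ(x)+1`)
that displaces the arc `(0, 1−δ)` must stretch somewhere by at least `(1−δ)/δ`. -/
theorem stmt19 (δ : ℝ) (hδ : δ ∈ Ioo (0:ℝ) 1) (φ : ℝ → ℝ)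
    (hφ : ContDiff ℝ 1 φ) (hφ' : ∀ x : ℝ, 0 < deriv φ x)
    (hper : ∀ x : ℝ, φ (x + 1) = φ x + 1)
    (hdisp : ∀ x ∈ Ioo (0:ℝ) (1 - δ), Int.fract (φ x) ∉ Ioo (0:ℝ) (1 - δ)) :
    (1 - δ) / δ ≤ ⨆ x : ℝ, deriv φ x := by
  have hlen := stmt19_image_length_le δ hδ φ hφ.continuous hdisp
  obtain ⟨h0, h1⟩ := hδ
  obtain ⟨c, -, hc⟩ := exists_deriv_eq_slope φ (by linarith : 1 - δ < 1)
    hφ.continuous.continuousOn (hφ.differentiable one_ne_zero).differentiableOn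
  refine le_trans ?_ (le_ciSup (stmt19_bddAbove_deriv φ hφ hper) c)
  have hone : φ 1 = φ 0 + 1 := by simpa using hper 0
  rw [hc, sub_sub_cancel, div_le_div_iff_of_pos_right h0]
  linarith
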